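/- Let J ∈ ℕ_* and let Ξ be a K × N real matrix. Then the infimum of Σ_{j=1}^{J} ‖Υ_j‖_F² over all tuples (Υ_1, …, Υ_J) of K × N real matrices whose entrywise (Hadamard) product Υ_1 ⊙ ⋯ ⊙ Υ_J equals Ξ is J · Σ_{k=1}^{K} Σ_{a=1}^{N} |Ξ_{k,a}|^{2/J}, i.e., J times the 2/J quasi-norm of Ξ raised to the power 2/J, and this infimum is attained. -/

import Mathlib

open Finset Matrix

attribute [local instance] Matrix.frobeniusNormedAddCommGroup

/-! The squared Frobenius norm is a sum over entries and the constraint is imposed entry by entry,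
so the minimization decouples into scalar ones. For a single entry `c`, AM-GM applied to the
numbers `‖x j‖ ^ 2` gives the lower bound `J * ‖c‖ ^ (2 / J)`, with equality when all factors have
the same modulus `‖c‖ ^ (1 / J)`. -/

theorem card_mul_norm_prod_rpow_le_sum_norm_rpow {ι 𝕜 : Type*} [NormedField 𝕜] (s : Finset ι)
    (x : ι → 𝕜) (p : ℝ) :
    #s * ‖∏ j ∈ s, x j‖ ^ (p / #s) ≤ ∑ j ∈ s, ‖x j‖ ^ p := by
  obtain rfl | hs := s.eq_empty_or_nonempty
  · simp
  have card_pos : (0 : ℝ) < #s := by exact_mod_cast hs.card_pos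
  have am_gm : (∏ j ∈ s, ‖x j‖ ^ p) ^ (#s : ℝ)⁻¹ ≤ (∑ j ∈ s, ‖x j‖ ^ p) / #s := by
    simpa using Real.geom_mean_le_arith_mean s 1 (fun j ↦ ‖x j‖ ^ p) (by simp)
      (by simpa using hs) fun j _ ↦ by positivity
  calc #s * ‖∏ j ∈ s, x j‖ ^ (p / #s)
      = #s * (∏ j ∈ s, ‖x j‖ ^ p) ^ (#s : ℝ)⁻¹ := by
        rw [norm_prod, Real.finsetProd_rpow s _ (fun j _ ↦ norm_nonneg (x j)), div_eq_mul_inv,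
          Real.rpow_mul (by positivity)]
    _ ≤ ∑ j ∈ s, ‖x j‖ ^ p := (le_div_iff₀' card_pos).mp am_gm

section

variable {ι m n 𝕜 : Type*} [Fintype ι] [Fintype m] [Fintype n]

theorem exists_prod_eq_and_forall_norm_eq_rpow_inv_card [Nonempty ι] [RCLike 𝕜] (c : 𝕜) :
    ∃ x : ι → 𝕜, ∏ j, x j = c ∧ ∀ j, ‖x j‖ = ‖c‖ ^ (Fintype.card ι : ℝ)⁻¹ := by
  classical
  obtain ⟨u, norm_u, hu⟩ := RCLike.exists_norm_mul_eq_self c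
  let j₀ : ι := Classical.arbitrary ι
  let phase : ι → 𝕜 := Pi.mulSingle j₀ u
  let r : ℝ := ‖c‖ ^ (Fintype.card ι : ℝ)⁻¹
  refine ⟨fun j ↦ phase j * (r : 𝕜), ?_, fun j ↦ ?_⟩
  · have r_pow : r ^ Fintype.card ι = ‖c‖ :=
      Real.rpow_inv_natCast_pow (norm_nonneg c) Fintype.card_ne_zero
    rw [prod_mul_distrib, Fintype.prod_pi_mulSingle', prod_const, card_univ, ← RCLike.ofReal_pow,
      r_pow, hu]
  · have norm_phase : ‖phase j‖ = 1 := by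
      obtain hj | hj := eq_or_ne j j₀ <;> simp [phase, hj, norm_u]
    rw [norm_mul, norm_phase, one_mul, RCLike.norm_of_nonneg (by positivity)]

theorem isLeast_sum_norm_rpow_of_prod_eq [Nonempty ι] [RCLike 𝕜] (c : 𝕜) (p : ℝ) :
    IsLeast {y : ℝ | ∃ x : ι → 𝕜, ∏ j, x j = c ∧ y = ∑ j, ‖x j‖ ^ p}
      (Fintype.card ι * ‖c‖ ^ (p / Fintype.card ι)) := by
  constructor
  · obtain ⟨x, hx, norm_x⟩ := exists_prod_eq_and_forall_norm_eq_rpow_inv_card (ι := ι) c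
    refine ⟨x, hx, ?_⟩
    simp only [norm_x, ← Real.rpow_mul (norm_nonneg c), sum_const, card_univ, nsmul_eq_mul,
      inv_mul_eq_div]
  · rintro _ ⟨x, rfl, rfl⟩
    exact card_mul_norm_prod_rpow_le_sum_norm_rpow univ x p

theorem frobenius_norm_sq {E : Type*} [NormedAddCommGroup E] (A : Matrix m n E) :
    ‖A‖ ^ 2 = ∑ i, ∑ k, ‖A i k‖ ^ 2 := by
  simp only [frobenius_norm_def, ← Real.sqrt_eq_rpow, Real.rpow_two]
  exact Real.sq_sqrt (by positivity)

theorem sum_frobenius_norm_sq {E : Type*} [NormedAddCommGroup E] (Υ : ι → Matrix m n E) :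
    ∑ j, ‖Υ j‖ ^ 2 = ∑ i, ∑ k, ∑ j, ‖Υ j i k‖ ^ 2 := by
  simp only [frobenius_norm_sq]
  rw [sum_comm]
  exact sum_congr rfl fun i _ ↦ sum_comm

theorem isLeast_hadamard_overparametrization_frobeniusSq_sum_general [Nonempty ι] [RCLike 𝕜]
    (Ξ : Matrix m n 𝕜) :
    IsLeast {y : ℝ | ∃ Υ : ι → Matrix m n 𝕜,
        (∀ i k, ∏ j, Υ j i k = Ξ i k) ∧ y = ∑ j, ‖Υ j‖ ^ 2}
      (Fintype.card ι * ∑ i, ∑ k, ‖Ξ i k‖ ^ ((2 : ℝ) / Fintype.card ι)) := by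
  have entrywise (i : m) (k : n) := isLeast_sum_norm_rpow_of_prod_eq (ι := ι) (Ξ i k) 2
  simp only [Real.rpow_two] at entrywise
  simp only [sum_frobenius_norm_sq, mul_sum]
  constructor
  · choose x prod_x sum_x using fun i k ↦ (entrywise i k).1
    exact ⟨fun j ↦ of fun i k ↦ x i k j, prod_x,
      sum_congr rfl fun i _ ↦ sum_congr rfl fun k _ ↦ sum_x i k⟩
  · rintro _ ⟨Υ, hΥ, rfl⟩
    exact sum_le_sum fun i _ ↦ sum_le_sum fun k _ ↦ (entrywise i k).2 ⟨(Υ · i k), hΥ i k, rfl⟩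

end

/-- For `J ∈ ℕ_*` and a `K × N` real matrix `Ξ`, the infimum of `∑_{j=1}^J ‖Υ_j‖_F²` over
all Hadamard overparametrizations `(Υ_1, …, Υ_J)` of `Ξ` (i.e. `Υ_1 ⊙ ⋯ ⊙ Υ_J = Ξ`
entrywise) equals `J · ∑_{k,a} |Ξ_{k,a}|^{2/J} = J · ‖Ξ‖_{2/J}^{2/J}`, and the infimum is
attained.  (Here `‖·‖` is the Frobenius norm on matrices.) -/
theorem isLeast_hadamard_overparametrization_frobeniusSq_sum
    (J K N : ℕ) (hJ : 0 < J) (hK : 0 < K) (hN : 0 < N)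
    (Ξ : Matrix (Fin K) (Fin N) ℝ) :
    IsLeast {y : ℝ | ∃ Υ : Fin J → Matrix (Fin K) (Fin N) ℝ,
        (∀ k a, (∏ j, Υ j k a) = Ξ k a) ∧ y = ∑ j, ‖Υ j‖ ^ 2}
      ((J : ℝ) * ∑ k, ∑ a, |Ξ k a| ^ ((2 : ℝ) / (J : ℝ))) := by
  have : Nonempty (Fin J) := Fin.pos_iff_nonempty.mp hJ
  simpa using isLeast_hadamard_overparametrization_frobeniusSq_sum_general (ι := Fin J) Ξ
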